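/- Let n ≥ 1 and P ≥ 2 be integers, let T ≥ 1 be an integer, and let η > 0, v ≥ 0, L ≥ 0, Δ ≥ 0 be real numbers. For each t ∈ {1,…,T} let f_t : ℝⁿ → ℝ be a convex function, let x̃_t, x_t, g_t ∈ ℝⁿ (Euclidean norm ‖·‖ and inner product ⟨·,·⟩), and let x_{T+1} ∈ ℝⁿ. Assume: (i) for every t and every y ∈ ℝⁿ, f_t(y) ≥ f_t(x̃_t) + ⟨g_t, y − x̃_t⟩ (g_t is a subgradient of f_t at x̃_t), and ‖g_t‖ ≤ L; (ii) x_{t+1} = x_t − (η/√t)·g_t for all t ∈ {1,…,T}; (iii) for each t there exist vectors s_{t,1},…,s_{t,P−1} ∈ ℝⁿ with x̃_t − x_t = Σ_{k=1}^{P−1} s_{t,k} and, for every coordinate i ∈ {1,…,n} and every k, |(s_{t,k})_i| ≤ (v/√t)·|(x̃_t)_i| (the significance filter with threshold v_t = v/√t); (iv) ½‖x̃_t‖² ≤ Δ² for all t ∈ {1,…,T}. Then for every x* ∈ ℝⁿ with ½‖x* − x_t‖² ≤ Δ² for all t ∈ {1,…,T}, the regret satisfies Σ_{t=1}^T ( f_t(x̃_t)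 − f_t(x*) ) ≤ ( η·L² + Δ²/η + 2√2·Δ·(P−1)·L·n·√n·v )·√T. In particular the regret is O(√T), so the regret divided by T tends to 0 as T → ∞. -/

import Mathlib

open scoped RealInnerProductSpace

/-!
A subgradient step of size `ε` satisfies
`⟪g, x - z⟫ = ε / 2 * ‖g‖² + (‖z - x‖² / 2 - ‖z - (x - ε • g)‖² / 2) / ε`, and evaluating the
subgradient at the noisy view `x̃` instead of `x` costs at most `‖g‖ * ‖x̃ - x‖`. Summed over time,
the differences of squared distances are controlled by Abel summation, because `1 / ε` is
nondecreasing, and with `ε = η / √t` and noise of order `1 / √t` the two remaining sums are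
multiples of `∑ 1 / √t ≤ 2 * √T`. The significance filter bounds the noise in Euclidean norm
directly, with no loss in the dimension.
-/

lemma norm_le_mul_norm_of_norm_apply_le {ι : Type*} [Fintype ι] {p : ENNReal} [Fact (1 ≤ p)]
    {β γ : ι → Type*} [∀ i, SeminormedAddCommGroup (β i)] [∀ i, SeminormedAddCommGroup (γ i)]
    {c : ℝ} (hc : 0 ≤ c) {s : PiLp p β} {y : PiLp p γ} (h : ∀ i, ‖s i‖ ≤ c * ‖y i‖) :
    ‖s‖ ≤ c * ‖y‖ := by
  rcases eq_or_ne p ⊤ with rfl | hp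
  · rw [PiLp.norm_eq_ciSup]
    exact Real.iSup_le (fun i => (h i).trans (by gcongr; exact PiLp.norm_apply_le y i))
      (by positivity)
  · have hp_pos : 0 < p.toReal :=
      ENNReal.toReal_pos (zero_lt_one.trans_le Fact.out).ne' hp
    calc ‖s‖ = (∑ i, ‖s i‖ ^ p.toReal) ^ (1 / p.toReal) := PiLp.norm_eq_sum hp_pos s
      _ ≤ (∑ i, (c * ‖y i‖) ^ p.toReal) ^ (1 / p.toReal) := by gcongr with i; exact h i
      _ = (c ^ p.toReal * ∑ i, ‖y i‖ ^ p.toReal) ^ (1 / p.toReal) := by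
        simp_rw [Real.mul_rpow hc (norm_nonneg _), Finset.mul_sum]
      _ = c * ‖y‖ := by
        rw [Real.mul_rpow (by positivity) (by positivity), one_div,
          Real.rpow_rpow_inv hc hp_pos.ne', PiLp.norm_eq_sum hp_pos, one_div]

lemma norm_sum_le_card_mul_norm_of_norm_apply_le {ι κ : Type*} [Fintype ι] [Fintype κ]
    {p : ENNReal} [Fact (1 ≤ p)] {β γ : ι → Type*} [∀ i, SeminormedAddCommGroup (β i)]
    [∀ i, SeminormedAddCommGroup (γ i)] {c : ℝ} (hc : 0 ≤ c) {s : κ → PiLp p β} {y : PiLp p γ}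
    (h : ∀ i k, ‖s k i‖ ≤ c * ‖y i‖) :
    ‖∑ k, s k‖ ≤ Fintype.card κ * (c * ‖y‖) := by
  calc ‖∑ k, s k‖ ≤ ∑ _k : κ, c * ‖y‖ :=
        norm_sum_le_of_le _ fun k _ => norm_le_mul_norm_of_norm_apply_le hc fun i => h i k
    _ = Fintype.card κ * (c * ‖y‖) := by
        rw [Finset.sum_const, nsmul_eq_mul, Finset.card_univ]

lemma le_sqrt_two_mul_of_half_mul_sq_le {a b : ℝ} (hb : 0 ≤ b) (h : 1 / 2 * a ^ 2 ≤ b ^ 2) :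
    a ≤ √2 * b := by
  refine le_of_sq_le_sq ?_ (by positivity)
  rw [mul_pow, Real.sq_sqrt zero_le_two]
  linarith

lemma mul_le_mul_natCast_mul_sqrt_mul {n : ℕ} (hn : 1 ≤ n) {a b : ℝ} (ha : 0 ≤ a) (hb : 0 ≤ b) :
    a * b ≤ a * n * √n * b := by
  have hn_real : (1 : ℝ) ≤ n := by exact_mod_cast hn
  rw [mul_assoc a]
  gcongr
  exact le_mul_of_one_le_right ha
    (one_le_mul_of_one_le_of_one_le hn_real (Real.one_le_sqrt.mpr hn_real))

lemma inv_sqrt_add_one_le {a : ℝ} (ha : 0 ≤ a) : (√(a + 1))⁻¹ ≤ 2 * (√(a + 1) - √a) := by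
  rw [inv_le_iff_one_le_mul₀ (by positivity)]
  nlinarith [sq_nonneg (√(a + 1) - √a), Real.sq_sqrt ha,
    Real.sq_sqrt (add_nonneg ha zero_le_one)]

lemma sum_Icc_inv_sqrt_le (T : ℕ) : ∑ t ∈ Finset.Icc 1 T, (√(t : ℝ))⁻¹ ≤ 2 * √T := by
  induction T with
  | zero => simp
  | succ m ih =>
    rw [Finset.sum_Icc_succ_top (by lia), Nat.cast_succ]
    linarith [inv_sqrt_add_one_le (Nat.cast_nonneg (α := ℝ) m)]

lemma sum_Icc_mul_sub_succ_le {R : Type*} [CommRing R] [PartialOrder R] [IsOrderedRing R]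
    {w D : ℕ → R} {B : R} {T : ℕ} (hT : 1 ≤ T) (hw_one : 0 ≤ w 1)
    (hw : MonotoneOn w (Set.Icc 1 T)) (hD : ∀ t ∈ Finset.Icc 1 T, D t ≤ B) :
    ∑ t ∈ Finset.Icc 1 T, w t * (D t - D (t + 1)) ≤ w T * (B - D (T + 1)) := by
  induction T, hT using Nat.le_induction with
  | base =>
    rw [Finset.Icc_self, Finset.sum_singleton]
    gcongr
    exact hD 1 (by simp)
  | succ m hm ih =>
    have hprefix := ih (hw.mono (Set.Icc_subset_Icc_right m.le_succ))
      fun t ht => hD t (Finset.Icc_subset_Icc_right m.le_succ ht)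
    have hw_succ : w m ≤ w (m + 1) := hw ⟨hm, m.le_succ⟩ ⟨by lia, le_rfl⟩ m.le_succ
    have hD_succ : D (m + 1) ≤ B := hD (m + 1) (Finset.mem_Icc.mpr ⟨by lia, le_rfl⟩)
    rw [Finset.sum_Icc_succ_top (by lia)]
    calc _ ≤ w m * (B - D (m + 1)) + w (m + 1) * (D (m + 1) - D (m + 1 + 1)) := by gcongr
      _ ≤ w (m + 1) * (B - D (m + 1)) + w (m + 1) * (D (m + 1) - D (m + 1 + 1)) := by
        gcongr
      _ = w (m + 1) * (B - D (m + 1 + 1)) := by ring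

section InnerProductSpace

variable {E : Type*} [NormedAddCommGroup E] [InnerProductSpace ℝ E]

lemma inner_sub_eq_of_gradient_step {ε : ℝ} (hε : ε ≠ 0) (x z g : E) :
    ⟪g, x - z⟫ = ε / 2 * ‖g‖ ^ 2 +
      ε⁻¹ * (1 / 2 * ‖z - x‖ ^ 2 - 1 / 2 * ‖z - (x - ε • g)‖ ^ 2) := by
  have hstep : z - (x - ε • g) = ε • g - (x - z) := by abel
  rw [hstep, norm_sub_sq_real (ε • g), norm_sub_rev z x, norm_smul, mul_pow, real_inner_smul_left,
    Real.norm_eq_abs, sq_abs]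
  field

lemma sub_le_of_subgradient_of_gradient_step {f : E → ℝ} {y x z g : E} {ε : ℝ} (hε : ε ≠ 0)
    (hsub : f y + ⟪g, z - y⟫ ≤ f z) :
    f y - f z ≤ ε / 2 * ‖g‖ ^ 2 + ‖g‖ * ‖y - x‖ +
      ε⁻¹ * (1 / 2 * ‖z - x‖ ^ 2 - 1 / 2 * ‖z - (x - ε • g)‖ ^ 2) := by
  have hsplit : ⟪g, z - y⟫ = -⟪g, x - z⟫ - ⟪g, y - x⟫ := by
    rw [← inner_neg_right, ← inner_sub_right]
    congr 1
    abel
  linarith [inner_sub_eq_of_gradient_step hε x z g, real_inner_le_norm g (y - x)]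

variable {f : ℕ → E → ℝ} {xtil x g : ℕ → E} {z : E} {L B : ℝ} {T : ℕ}

theorem regret_le_of_antitoneOn_step {ε δ : ℕ → ℝ} (hT : 1 ≤ T)
    (hε_pos : ∀ t ∈ Finset.Icc 1 T, 0 < ε t) (hε : AntitoneOn ε (Set.Icc 1 T))
    (hsub : ∀ t ∈ Finset.Icc 1 T, f t (xtil t) + ⟪g t, z - xtil t⟫ ≤ f t z)
    (hgL : ∀ t ∈ Finset.Icc 1 T, ‖g t‖ ≤ L)
    (hupd : ∀ t ∈ Finset.Icc 1 T, x (t + 1) = x t - ε t • g t)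
    (hgap : ∀ t ∈ Finset.Icc 1 T, ‖xtil t - x t‖ ≤ δ t)
    (hz : ∀ t ∈ Finset.Icc 1 T, 1 / 2 * ‖z - x t‖ ^ 2 ≤ B) :
    ∑ t ∈ Finset.Icc 1 T, (f t (xtil t) - f t z) ≤
      L ^ 2 / 2 * ∑ t ∈ Finset.Icc 1 T, ε t + L * ∑ t ∈ Finset.Icc 1 T, δ t + (ε T)⁻¹ * B := by
  set D : ℕ → ℝ := fun t => 1 / 2 * ‖z - x t‖ ^ 2
  have hstep : ∀ t ∈ Finset.Icc 1 T, f t (xtil t) - f t z ≤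
      L ^ 2 / 2 * ε t + L * δ t + (ε t)⁻¹ * (D t - D (t + 1)) := by
    intro t ht
    have hεt := hε_pos t ht
    have hL : 0 ≤ L := (norm_nonneg _).trans (hgL t ht)
    calc f t (xtil t) - f t z
        ≤ ε t / 2 * ‖g t‖ ^ 2 + ‖g t‖ * ‖xtil t - x t‖ + (ε t)⁻¹ * (D t - D (t + 1)) := by
          simp only [D, hupd t ht]
          exact sub_le_of_subgradient_of_gradient_step hεt.ne' (hsub t ht)
      _ ≤ ε t / 2 * L ^ 2 + L * δ t + (ε t)⁻¹ * (D t - D (t + 1)) := by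
          gcongr
          exacts [hgL t ht, hgL t ht, hgap t ht]
      _ = L ^ 2 / 2 * ε t + L * δ t + (ε t)⁻¹ * (D t - D (t + 1)) := by ring
  have hinv_mono : MonotoneOn (fun t => (ε t)⁻¹) (Set.Icc 1 T) := fun s hs t ht hst =>
    inv_anti₀ (hε_pos t (Finset.mem_Icc.mpr ht)) (hε hs ht hst)
  have hinv_one : 0 ≤ (ε 1)⁻¹ := (inv_pos.mpr (hε_pos 1 (by simpa using hT))).le
  have hinv_T : 0 ≤ (ε T)⁻¹ := (inv_pos.mpr (hε_pos T (by simpa using hT))).le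
  have htelescope : ∑ t ∈ Finset.Icc 1 T, (ε t)⁻¹ * (D t - D (t + 1)) ≤ (ε T)⁻¹ * B :=
    (sum_Icc_mul_sub_succ_le hT hinv_one hinv_mono hz).trans <| by
      gcongr
      exact sub_le_self B (by positivity)
  refine (Finset.sum_le_sum hstep).trans ?_
  simp only [Finset.sum_add_distrib, ← Finset.mul_sum]
  gcongr

theorem regret_le_of_inv_sqrt_step {η δ : ℝ} (hT : 1 ≤ T) (hη : 0 < η)
    (hsub : ∀ t ∈ Finset.Icc 1 T, f t (xtil t) + ⟪g t, z - xtil t⟫ ≤ f t z)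
    (hgL : ∀ t ∈ Finset.Icc 1 T, ‖g t‖ ≤ L)
    (hupd : ∀ t ∈ Finset.Icc 1 T, x (t + 1) = x t - (η / √t) • g t)
    (hgap : ∀ t ∈ Finset.Icc 1 T, ‖xtil t - x t‖ ≤ δ / √t)
    (hz : ∀ t ∈ Finset.Icc 1 T, 1 / 2 * ‖z - x t‖ ^ 2 ≤ B) :
    ∑ t ∈ Finset.Icc 1 T, (f t (xtil t) - f t z) ≤ (η * L ^ 2 + B / η + 2 * L * δ) * √T := by
  have hsqrt_pos : ∀ t : ℕ, 1 ≤ t → 0 < √(t : ℝ) := fun t ht =>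
    Real.sqrt_pos.mpr (by exact_mod_cast ht)
  have hL : 0 ≤ L := (norm_nonneg _).trans (hgL 1 (by simpa using hT))
  have hδ : 0 ≤ δ := by simpa using (norm_nonneg _).trans (hgap 1 (by simpa using hT))
  have hstep_pos : ∀ t ∈ Finset.Icc 1 T, 0 < η / √(t : ℝ) := fun t ht =>
    div_pos hη (hsqrt_pos t (Finset.mem_Icc.mp ht).1)
  have hstep_anti : AntitoneOn (fun t : ℕ => η / √(t : ℝ)) (Set.Icc 1 T) := by
    intro s hs t _ hst
    have hs_pos := hsqrt_pos s hs.1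
    dsimp only
    gcongr
  have hsum (c : ℝ) :
      ∑ t ∈ Finset.Icc 1 T, c / √(t : ℝ) = c * ∑ t ∈ Finset.Icc 1 T, (√(t : ℝ))⁻¹ := by
    simp only [div_eq_mul_inv, Finset.mul_sum]
  calc ∑ t ∈ Finset.Icc 1 T, (f t (xtil t) - f t z)
      ≤ L ^ 2 / 2 * ∑ t ∈ Finset.Icc 1 T, η / √(t : ℝ)
          + L * ∑ t ∈ Finset.Icc 1 T, δ / √(t : ℝ) + (η / √T)⁻¹ * B :=
        regret_le_of_antitoneOn_step hT hstep_pos hstep_anti hsub hgL hupd hgap hz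
    _ ≤ L ^ 2 / 2 * (η * (2 * √T)) + L * (δ * (2 * √T)) + (η / √T)⁻¹ * B := by
        rw [hsum, hsum]
        gcongr <;> exact sum_Icc_inv_sqrt_le T
    _ = (η * L ^ 2 + B / η + 2 * L * δ) * √T := by
        rw [inv_div]
        ring

end InnerProductSpace

theorem isp_sgd_regret_bound_general {ι κ : Type*} [Fintype ι] [Fintype κ] {T : ℕ} (hT : 1 ≤ T)
    {η v L Δ : ℝ} (hη : 0 < η) (hv : 0 ≤ v) (hΔ : 0 ≤ Δ)
    {f : ℕ → EuclideanSpace ℝ ι → ℝ} {xtil x g : ℕ → EuclideanSpace ℝ ι}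
    (hsub : ∀ t ∈ Finset.Icc 1 T, ∀ y, f t (xtil t) + ⟪g t, y - xtil t⟫ ≤ f t y)
    (hgL : ∀ t ∈ Finset.Icc 1 T, ‖g t‖ ≤ L)
    (hupd : ∀ t ∈ Finset.Icc 1 T, x (t + 1) = x t - (η / √t) • g t)
    (hfilter : ∀ t ∈ Finset.Icc 1 T, ∃ s : κ → EuclideanSpace ℝ ι,
      xtil t - x t = ∑ k, s k ∧ ∀ i k, |s k i| ≤ v / √t * |xtil t i|)
    (hxtilΔ : ∀ t ∈ Finset.Icc 1 T, 1 / 2 * ‖xtil t‖ ^ 2 ≤ Δ ^ 2) (z : EuclideanSpace ℝ ι)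
    (hz : ∀ t ∈ Finset.Icc 1 T, 1 / 2 * ‖z - x t‖ ^ 2 ≤ Δ ^ 2) :
    ∑ t ∈ Finset.Icc 1 T, (f t (xtil t) - f t z) ≤
      (η * L ^ 2 + Δ ^ 2 / η + 2 * √2 * Δ * Fintype.card κ * L * v) * √T := by
  have hgap : ∀ t ∈ Finset.Icc 1 T,
      ‖xtil t - x t‖ ≤ Fintype.card κ * v * (√2 * Δ) / √t := by
    intro t ht
    obtain ⟨s, hs_sum, hs_le⟩ := hfilter t ht
    calc ‖xtil t - x t‖ = ‖∑ k, s k‖ := by rw [hs_sum]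
      _ ≤ Fintype.card κ * (v / √t * ‖xtil t‖) :=
        norm_sum_le_card_mul_norm_of_norm_apply_le (by positivity) hs_le
      _ ≤ Fintype.card κ * (v / √t * (√2 * Δ)) := by
        gcongr
        exact le_sqrt_two_mul_of_half_mul_sq_le hΔ (hxtilΔ t ht)
      _ = Fintype.card κ * v * (√2 * Δ) / √t := by ring
  exact (regret_le_of_inv_sqrt_step hT hη (fun t ht => hsub t ht z) hgL hupd hgap hz).trans_eq
    (by ring)

/-- Theorem 1 (convergence of SGD under the ISP model): with decreasing step
sizes `η/√t`, `L`-bounded subgradients, the per-parameter significance filter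
with decreasing threshold `v/√t`, and bounded diameter `Δ`, the regret over `T`
steps is at most `(ηL² + Δ²/η + 2√2·Δ·(P−1)·L·n·√n·v)·√T = O(√T)`. -/
theorem isp_sgd_regret_bound
    (n P T : ℕ) (hn : 1 ≤ n) (hP : 2 ≤ P) (hT : 1 ≤ T)
    (η v L Δ : ℝ) (hη : 0 < η) (hv : 0 ≤ v) (hL : 0 ≤ L) (hΔ : 0 ≤ Δ)
    (f : ℕ → EuclideanSpace ℝ (Fin n) → ℝ)
    (xtil x g : ℕ → EuclideanSpace ℝ (Fin n))
    -- each `f t` is convex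
    (hconv : ∀ t ∈ Finset.Icc 1 T, ConvexOn ℝ Set.univ (f t))
    -- (i) `g t` is a subgradient of `f t` at `xtil t`, bounded by `L`
    (hsub : ∀ t ∈ Finset.Icc 1 T, ∀ y : EuclideanSpace ℝ (Fin n),
      f t (xtil t) + ⟪g t, y - xtil t⟫ ≤ f t y)
    (hgL : ∀ t ∈ Finset.Icc 1 T, ‖g t‖ ≤ L)
    -- (ii) SGD update with step size `η/√t`
    (hupd : ∀ t ∈ Finset.Icc 1 T, x (t + 1) = x t - (η / Real.sqrt t) • g t)
    -- (iii) significance filter: the gap is a sum of `P−1` per-worker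
    -- accumulated updates, each coordinatewise `(v/√t)`-insignificant
    (hfilter : ∀ t ∈ Finset.Icc 1 T,
      ∃ s : Fin (P - 1) → EuclideanSpace ℝ (Fin n),
        xtil t - x t = ∑ k, s k ∧
        ∀ (i : Fin n) (k : Fin (P - 1)),
          |s k i| ≤ (v / Real.sqrt t) * |xtil t i|)
    -- (iv) bounded diameter
    (hxtilΔ : ∀ t ∈ Finset.Icc 1 T, (1 / 2) * ‖xtil t‖ ^ 2 ≤ Δ ^ 2) :
    ∀ xstar : EuclideanSpace ℝ (Fin n),
      (∀ t ∈ Finset.Icc 1 T, (1 / 2) * ‖xstar - x t‖ ^ 2 ≤ Δ ^ 2) →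
      ∑ t ∈ Finset.Icc 1 T, (f t (xtil t) - f t xstar) ≤
        (η * L ^ 2 + Δ ^ 2 / η +
            2 * Real.sqrt 2 * Δ * ((P : ℝ) - 1) * L * (n : ℝ) * Real.sqrt n * v)
          * Real.sqrt T := by
  intro z hz
  have hsharp := isp_sgd_regret_bound_general hT hη hv hΔ hsub hgL hupd hfilter hxtilΔ z hz
  rw [Fintype.card_fin, Nat.cast_pred (by lia)] at hsharp
  have hP_sub : (0 : ℝ) ≤ (P : ℝ) - 1 := sub_nonneg.mpr (by exact_mod_cast one_le_two.trans hP)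
  refine hsharp.trans ?_
  gcongr (_ + ?_) * _
  exact mul_le_mul_natCast_mul_sqrt_mul hn (by positivity) hv
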